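/- arXiv:1003.5068 — 8 statements merged into one kernel-verified Lean document; each statement's English description precedes it below -/
import Mathlib

section
/- Foster drift condition establishing Theorem 1 (optimality of flow-aware CSMA): if the vector of traffic intensities ρ = (λ_1σ_1, …, λ_Kσ_K) lies in the interior of the capacity region, then there exist δ > 0 and a finite set A ⊆ ℕ^K such that for every state x ∈ ℕ^K with x ∉ A, the drift satisfies ΔF(x) ≤ −δ. -/
open scoped BigOperators

namespace FlowCSMA

/-- A set of links is a feasible schedule if its links are pairwise non-conflicting. -/
def Feasible {K : ℕ} (conflict : Fin K → Fin K → Prop) (S : Finset (Fin K)) : Prop :=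
  ∀ k ∈ S, ∀ l ∈ S, k ≠ l → ¬ conflict k l

/-- Weight of schedule `i` in state `x`:  `w_i(x) = ∏_{k ∈ S_i} α_k x_k`
(equal to 1 for the empty schedule). -/
noncomputable def schedWeight {K N : ℕ} (Sched : Fin N → Finset (Fin K)) (α : Fin K → ℝ)
    (x : Fin K → ℕ) (i : Fin N) : ℝ :=
  ∏ k ∈ Sched i, α k * (x k : ℝ)

/-- Selection probability of schedule `i` in state `x`. -/
noncomputable def schedProb {K N : ℕ} (Sched : Fin N → Finset (Fin K)) (α : Fin K → ℝ)
    (x : Fin K → ℕ) (i : Fin N) : ℝ :=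
  schedWeight Sched α x i / ∑ j, schedWeight Sched α x j

/-- Throughput of link `k` in state `x`: `φ_k(x) = φ̂_k ∑_{i : k ∈ S_i} p_i(x)`. -/
noncomputable def throughput {K N : ℕ} (Sched : Fin N → Finset (Fin K)) (α φhat : Fin K → ℝ)
    (x : Fin K → ℕ) (k : Fin K) : ℝ :=
  φhat k * ∑ i ∈ Finset.univ.filter (fun i => k ∈ Sched i), schedProb Sched α x i

/-- The capacity region: vectors `φ` with `φ_k = φ̂_k ∑_{i : k ∈ S_i} p_i`
for some probability vector `p`. -/
def CapacityRegion {K N : ℕ} (Sched : Fin N → Finset (Fin K)) (φhat : Fin K → ℝ) :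
    Set (Fin K → ℝ) :=
  {φ | ∃ p : Fin N → ℝ, (∀ i, 0 ≤ p i) ∧ (∑ i, p i) = 1 ∧
    ∀ k, φ k = φhat k * ∑ i ∈ Finset.univ.filter (fun i => k ∈ Sched i), p i}

/-- Lyapunov function `F(x) = ∑_{k : x_k > 0} (σ_k/φ̂_k) x_k (log(α_k x_k) - 1)`. -/
noncomputable def F {K : ℕ} (α φhat σ : Fin K → ℝ) (x : Fin K → ℕ) : ℝ :=
  ∑ k ∈ Finset.univ.filter (fun k => 0 < x k),
    (σ k / φhat k) * (x k : ℝ) * (Real.log (α k * (x k : ℝ)) - 1)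

/-- The drift `ΔF(x)` of the flow-level Markov process. -/
noncomputable def drift {K N : ℕ} (Sched : Fin N → Finset (Fin K)) (α φhat lam σ : Fin K → ℝ)
    (x : Fin K → ℕ) : ℝ :=
  ∑ k, lam k * (F α φhat σ (Function.update x k (x k + 1)) - F α φhat σ x) +
    ∑ k ∈ Finset.univ.filter (fun k => 0 < x k),
      (throughput Sched α φhat x k / σ k) *
        (F α φhat σ (Function.update x k (x k - 1)) - F α φhat σ x)

noncomputable def ff (a : ℝ) (n : ℕ) : ℝ := (n : ℝ) * (Real.log (a * (n : ℝ)) - 1)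

lemma ff_up_zero (a : ℝ) : ff a (0 + 1) - ff a 0 ≤ |Real.log a| + 1 := by
  have := le_abs_self (Real.log a)
  simp [ff]
  linarith

lemma ff_up (a : ℝ) (ha : 0 < a) (n : ℕ) (hn : 0 < n) :
    ff a (n + 1) - ff a n ≤ Real.log (a * n) + 1 := by
  have hn' : (1 : ℝ) ≤ n := by exact_mod_cast hn
  have h0 : (0 : ℝ) < n := by linarith
  unfold ff
  push_cast
  rw [Real.log_mul ha.ne' (by positivity), Real.log_mul ha.ne' h0.ne']
  have h1 : Real.log ((n + 1 : ℝ) / n) ≤ (n + 1 : ℝ) / n - 1 :=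
    Real.log_le_sub_one_of_pos (by positivity)
  rw [Real.log_div (by positivity) h0.ne'] at h1
  have h2 : (n + 1 : ℝ) / n - 1 = 1 / n := by field_simp; ring
  rw [h2] at h1
  have h3 : (n + 1 : ℝ) * (Real.log (n + 1) - Real.log n) ≤ (n + 1) * (1 / n) :=
    mul_le_mul_of_nonneg_left h1 (by positivity)
  have h4 : (n + 1 : ℝ) * (1 / n) ≤ 2 := by
    rw [mul_one_div, div_le_iff₀ h0]; linarith
  nlinarith

lemma ff_down (a : ℝ) (ha : 0 < a) (n : ℕ) (hn : 0 < n) :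
    ff a (n - 1) - ff a n ≤ - Real.log (a * n) + 1 := by
  obtain ⟨m, rfl⟩ : ∃ m, n = m + 1 := ⟨n - 1, by omega⟩
  simp only [Nat.add_sub_cancel]
  unfold ff
  rcases Nat.eq_zero_or_pos m with rfl | hm
  · simp
  have h0 : (0 : ℝ) < m := by exact_mod_cast hm
  push_cast
  rw [Real.log_mul ha.ne' h0.ne', Real.log_mul ha.ne' (by positivity)]
  have h1 : Real.log m ≤ Real.log (m + 1 : ℝ) := Real.log_le_log h0 (by linarith)
  nlinarith

lemma F_eq {K : ℕ} (α φhat σ : Fin K → ℝ) (x : Fin K → ℕ) :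
    F α φhat σ x = ∑ k, (σ k / φhat k) * ff (α k) (x k) := by
  unfold F ff
  rw [Finset.sum_filter]
  refine Finset.sum_congr rfl fun k _ => ?_
  split_ifs with h
  · ring
  · have : x k = 0 := by omega
    simp [this]

lemma F_update {K : ℕ} (α φhat σ : Fin K → ℝ) (x : Fin K → ℕ) (k : Fin K) (m : ℕ) :
    F α φhat σ (Function.update x k m) - F α φhat σ x
      = (σ k / φhat k) * (ff (α k) m - ff (α k) (x k)) := by
  rw [F_eq, F_eq, ← Finset.sum_sub_distrib, Finset.sum_eq_single k]
  · simp; ring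
  · intro b _ hb
    simp [Function.update_of_ne hb]
  · simp

lemma weight_nonneg {K N : ℕ} (Sched : Fin N → Finset (Fin K)) (α : Fin K → ℝ)
    (hα : ∀ k, 0 < α k) (x : Fin K → ℕ) (i : Fin N) : 0 ≤ schedWeight Sched α x i :=
  Finset.prod_nonneg fun k _ => mul_nonneg (hα k).le (Nat.cast_nonneg _)

lemma log_weight {K N : ℕ} (Sched : Fin N → Finset (Fin K)) (α : Fin K → ℝ)
    (x : Fin K → ℕ) (i : Fin N) (h : schedWeight Sched α x i ≠ 0) :
    Real.log (schedWeight Sched α x i) = ∑ k ∈ Sched i, Real.log (α k * (x k : ℝ)) := by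
  unfold schedWeight at *
  exact Real.log_prod (fun k hk => Finset.prod_ne_zero_iff.1 h k hk)

lemma Z_pos {K N : ℕ} (hN : 0 < N) (Sched : Fin N → Finset (Fin K)) (hS0 : Sched ⟨0, hN⟩ = ∅)
    (α : Fin K → ℝ) (hα : ∀ k, 0 < α k) (x : Fin K → ℕ) :
    0 < ∑ j, schedWeight Sched α x j := by
  refine Finset.sum_pos' (fun i _ => weight_nonneg Sched α hα x i) ⟨⟨0, hN⟩, Finset.mem_univ _, ?_⟩
  simp [schedWeight, hS0]

lemma sum_log_le {K N : ℕ} (conflict : Fin K → Fin K → Prop)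
    (Sched : Fin N → Finset (Fin K))
    (hfeas : ∀ i, Feasible conflict (Sched i))
    (hsurj : ∀ S : Finset (Fin K), Feasible conflict S → ∃ i, Sched i = S)
    (α : Fin K → ℝ) (hα : ∀ k, 0 < α k) (x : Fin K → ℕ) (i : Fin N) :
    ∑ k ∈ Sched i, Real.log (α k * (x k : ℝ)) ≤ Real.log (∑ j, schedWeight Sched α x j) := by
  obtain ⟨j, hj⟩ := hsurj ((Sched i).filter (fun k => 0 < x k)) (by
    intro k hk l hl
    exact hfeas i k (Finset.mem_filter.1 hk).1 l (Finset.mem_filter.1 hl).1)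
  have hpos : 0 < schedWeight Sched α x j := by
    unfold schedWeight
    refine Finset.prod_pos fun k hk => ?_
    rw [hj, Finset.mem_filter] at hk
    exact mul_pos (hα k) (by exact_mod_cast hk.2)
  have h1 : ∑ k ∈ Sched i, Real.log (α k * (x k : ℝ)) = Real.log (schedWeight Sched α x j) := by
    rw [log_weight _ _ _ _ hpos.ne', hj, Finset.sum_filter]
    refine Finset.sum_congr rfl fun k _ => ?_
    split_ifs with h
    · rfl
    · have : x k = 0 := by omega
      simp [this]
  rw [h1]
  exact Real.log_le_log hpos
    (Finset.single_le_sum (fun i _ => weight_nonneg Sched α hα x i) (Finset.mem_univ j))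

lemma prob_log_ge {K N : ℕ} (Sched : Fin N → Finset (Fin K))
    (α : Fin K → ℝ) (hα : ∀ k, 0 < α k) (x : Fin K → ℕ)
    (hZ : 0 < ∑ j, schedWeight Sched α x j) (i : Fin N) :
    schedProb Sched α x i * Real.log (∑ j, schedWeight Sched α x j) - 1 ≤
      schedProb Sched α x i * ∑ k ∈ Sched i, Real.log (α k * (x k : ℝ)) := by
  rcases (weight_nonneg Sched α hα x i).eq_or_lt with h | h
  · simp [schedProb, ← h]
  rw [← log_weight _ _ _ _ h.ne']
  unfold schedProb
  set Z := ∑ j, schedWeight Sched α x j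
  set w := schedWeight Sched α x i
  have h1 : Real.log (Z / w) ≤ Z / w - 1 := Real.log_le_sub_one_of_pos (by positivity)
  rw [Real.log_div hZ.ne' h.ne'] at h1
  have h2 : w / Z * (Real.log Z - Real.log w) ≤ w / Z * (Z / w - 1) :=
    mul_le_mul_of_nonneg_left h1 (by positivity)
  have h3 : w / Z * (Z / w - 1) = 1 - w / Z := by field_simp
  have h4 : 0 ≤ w / Z := by positivity
  nlinarith

lemma swap {K N : ℕ} (Sched : Fin N → Finset (Fin K)) (p : Fin N → ℝ) (L : Fin K → ℝ) :
    ∑ k, (∑ i ∈ Finset.univ.filter (fun i => k ∈ Sched i), p i) * L k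
      = ∑ i, p i * ∑ k ∈ Sched i, L k := by
  simp_rw [Finset.sum_mul, Finset.sum_filter, Finset.mul_sum]
  rw [Finset.sum_comm]
  refine Finset.sum_congr rfl fun i _ => ?_
  rw [← Finset.sum_filter]
  congr 1
  ext k; simp

lemma drift_le {K N : ℕ} (Sched : Fin N → Finset (Fin K))
    (α φhat lam σ : Fin K → ℝ)
    (hα : ∀ k, 0 < α k) (hφ : ∀ k, 0 < φhat k)
    (hlam : ∀ k, 0 < lam k) (hσ : ∀ k, 0 < σ k) (x : Fin K → ℕ)
    (hZ : 0 < ∑ j, schedWeight Sched α x j) :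
    drift Sched α φhat lam σ x ≤
      ∑ k, (lam k * σ k / φhat k) * Real.log (α k * (x k : ℝ))
      - ∑ k, (∑ i ∈ Finset.univ.filter (fun i => k ∈ Sched i), schedProb Sched α x i) *
          Real.log (α k * (x k : ℝ))
      + ∑ k, (lam k * σ k / φhat k * (|Real.log (α k)| + 1) + 1) := by
  unfold drift
  rw [Finset.sum_filter, ← Finset.sum_add_distrib, ← Finset.sum_sub_distrib,
    ← Finset.sum_add_distrib]
  refine Finset.sum_le_sum fun k _ => ?_
  rw [F_update, F_update]
  unfold throughput
  have hp0 : ∀ i, 0 ≤ schedProb Sched α x i := fun i =>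
    div_nonneg (weight_nonneg Sched α hα x i) hZ.le
  have hp1 : ∑ i, schedProb Sched α x i = 1 := by
    unfold schedProb
    rw [← Finset.sum_div, div_self hZ.ne']
  set θ := ∑ i ∈ Finset.univ.filter (fun i => k ∈ Sched i), schedProb Sched α x i with hθ
  have hθ0 : 0 ≤ θ := Finset.sum_nonneg fun i _ => hp0 i
  have hθ1 : θ ≤ 1 := by
    rw [← hp1]
    exact Finset.sum_le_sum_of_subset_of_nonneg (Finset.filter_subset _ _) fun i _ _ => hp0 i
  have hf := hφ k
  have hs := hσ k
  have hl := hlam k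
  have hr : 0 ≤ lam k * σ k / φhat k := by positivity
  have e1 : ∀ y, lam k * (σ k / φhat k * y) = lam k * σ k / φhat k * y := fun y => by ring
  have e2 : ∀ y, φhat k * θ / σ k * (σ k / φhat k * y) = θ * y := fun y => by field_simp
  rw [e1, e2]
  set r := lam k * σ k / φhat k
  split_ifs with h
  · have a1 := mul_le_mul_of_nonneg_left (ff_up (α k) (hα k) (x k) h) hr
    have a2 := mul_le_mul_of_nonneg_left (ff_down (α k) (hα k) (x k) h) hθ0
    have a3 := mul_nonneg hr (abs_nonneg (Real.log (α k)))
    nlinarith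
  · have h0 : x k = 0 := by omega
    have a1 := mul_le_mul_of_nonneg_left (ff_up_zero (α k)) hr
    rw [h0]
    simp only [Nat.cast_zero, mul_zero, Real.log_zero]
    linarith

lemma finite_sub {K : ℕ} (α : Fin K → ℝ) (hα : ∀ k, 0 < α k) (M : ℝ) :
    {x : Fin K → ℕ | ∑ k, Real.log (α k * (x k : ℝ)) ≤ M}.Finite := by
  set B := ∑ k, |Real.log (α k)| with hB
  refine (Set.finite_Iic (fun k => ⌊Real.exp (M + B) / α k⌋₊)).subset ?_
  intro x hx k
  simp only [Set.mem_ofPred_eq] at hx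
  rcases Nat.eq_zero_or_pos (x k) with h | h
  · simp [h]
  apply Nat.le_floor
  have hk : (0 : ℝ) < x k := by exact_mod_cast h
  have hlow : ∀ j, 0 ≤ Real.log (α j * (x j : ℝ)) + |Real.log (α j)| := by
    intro j
    rcases Nat.eq_zero_or_pos (x j) with h | h
    · simp [h]
    have hj : (1 : ℝ) ≤ x j := by exact_mod_cast h
    rw [Real.log_mul (hα j).ne' (by positivity)]
    have := Real.log_nonneg hj
    have := neg_abs_le (Real.log (α j))
    linarith
  have h1 := Finset.single_le_sum (fun j _ => hlow j) (Finset.mem_univ k)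
  rw [Finset.sum_add_distrib] at h1
  have h2 : Real.log (α k * (x k : ℝ)) ≤ M + B := by
    have := abs_nonneg (Real.log (α k))
    linarith
  rw [Real.log_le_iff_le_exp (mul_pos (hα k) hk)] at h2
  rw [le_div_iff₀ (hα k)]
  linarith

lemma slack {K N : ℕ} (Sched : Fin N → Finset (Fin K)) (φhat ρ : Fin K → ℝ)
    (hint : ρ ∈ interior (CapacityRegion Sched φhat)) :
    ∃ ε : ℝ, 0 < ε ∧ (fun k => ρ k + ε * φhat k) ∈ CapacityRegion Sched φhat := by
  have hc : Continuous (fun t : ℝ => (fun k => ρ k + t * φhat k : Fin K → ℝ)) := by fun_prop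
  have ho := (isOpen_interior (s := CapacityRegion Sched φhat)).preimage hc
  obtain ⟨r, hr, hb⟩ := Metric.isOpen_iff.1 ho 0 (by simpa using hint)
  refine ⟨r / 2, by positivity, interior_subset (hb ?_)⟩
  simp [abs_of_pos hr]
  exact hr


/-- Foster drift condition (Theorem 1, optimality of flow-aware CSMA): if the vector of
traffic intensities `ρ = (λ_1 σ_1, …, λ_K σ_K)` lies in the interior of the capacity region,
then there exist `δ > 0` and a finite set `A ⊆ ℕ^K` such that `ΔF(x) ≤ -δ` for all `x ∉ A`. -/
theorem foster_drift_condition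
    {K N : ℕ} (hK : 0 < K) (hN : 0 < N)
    (conflict : Fin K → Fin K → Prop)
    (hsymm : ∀ k l, conflict k l → conflict l k)
    (Sched : Fin N → Finset (Fin K))
    (hfeas : ∀ i, Feasible conflict (Sched i))
    (hinj : Function.Injective Sched)
    (hsurj : ∀ S : Finset (Fin K), Feasible conflict S → ∃ i, Sched i = S)
    (hS0 : Sched ⟨0, hN⟩ = ∅)
    (α φhat lam σ : Fin K → ℝ)
    (hα : ∀ k, 0 < α k) (hφ : ∀ k, 0 < φhat k)
    (hlam : ∀ k, 0 < lam k) (hσ : ∀ k, 0 < σ k)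
    (ρ : Fin K → ℝ) (hρ : ∀ k, ρ k = lam k * σ k)
    (hint : ρ ∈ interior (CapacityRegion Sched φhat)) :
    ∃ δ : ℝ, 0 < δ ∧ ∃ A : Set (Fin K → ℕ), A.Finite ∧
      ∀ x ∉ A, drift Sched α φhat lam σ x ≤ -δ := by
  obtain ⟨ε, hε, p, hp0, hp1, hp⟩ := slack Sched φhat ρ hint
  set C := ∑ k, (lam k * σ k / φhat k * (|Real.log (α k)| + 1) + 1) with hC
  refine ⟨1, one_pos, _, finite_sub α hα ((C + N + 1) / ε), fun x hx => ?_⟩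
  simp only [Set.mem_ofPred_eq, not_le] at hx
  rw [div_lt_iff₀ hε] at hx
  have hZ := Z_pos hN Sched hS0 α hα x
  have hd := drift_le Sched α φhat lam σ hα hφ hlam hσ x hZ
  have hpk : ∀ k, lam k * σ k / φhat k
      = (∑ i ∈ Finset.univ.filter (fun i => k ∈ Sched i), p i) - ε := by
    intro k
    have h := hp k
    simp only at h
    rw [hρ] at h
    have := (hφ k).ne'
    rw [div_eq_iff this]
    linarith
  have h1 : ∑ k, (lam k * σ k / φhat k) * Real.log (α k * (x k : ℝ))
      = ∑ i, p i * ∑ k ∈ Sched i, Real.log (α k * (x k : ℝ))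
        - ε * ∑ k, Real.log (α k * (x k : ℝ)) := by
    rw [← swap, Finset.mul_sum, ← Finset.sum_sub_distrib]
    refine Finset.sum_congr rfl fun k _ => ?_
    rw [hpk, sub_mul]
  have h2 : ∑ i, p i * ∑ k ∈ Sched i, Real.log (α k * (x k : ℝ))
      ≤ Real.log (∑ j, schedWeight Sched α x j) := by
    calc _ ≤ ∑ i, p i * Real.log (∑ j, schedWeight Sched α x j) :=
          Finset.sum_le_sum fun i _ => mul_le_mul_of_nonneg_left
            (sum_log_le conflict Sched hfeas hsurj α hα x i) (hp0 i)
      _ = _ := by rw [← Finset.sum_mul, hp1, one_mul]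
  have h3 : Real.log (∑ j, schedWeight Sched α x j) - N ≤
      ∑ i, schedProb Sched α x i * ∑ k ∈ Sched i, Real.log (α k * (x k : ℝ)) := by
    have hs1 : ∑ i, schedProb Sched α x i = 1 := by
      unfold schedProb
      rw [← Finset.sum_div, div_self hZ.ne']
    have := Finset.sum_le_sum fun i (_ : i ∈ Finset.univ) => prob_log_ge Sched α hα x hZ i
    rw [Finset.sum_sub_distrib, ← Finset.sum_mul, hs1] at this
    simpa using this
  rw [h1, swap] at hd
  rw [← hC] at hd
  linarith

end FlowCSMA
end

section
/- Lemma 1: for every ε ∈ (0,1), for all states x ∈ ℕ^K except finitely many, Σ_{i=1}^N p_i(x) log w_i(x) ≥ (1−ε) log w(x), where terms with w_i(x) = 0 (hence p_i(x) = 0) are omitted from the sum. -/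
open scoped BigOperators

namespace FlowCSMA

/-- Maximal schedule weight `w(x) = max_{1 ≤ i ≤ N} w_i(x)`. -/
noncomputable def maxWeight {K N : ℕ} (hN : 0 < N) (Sched : Fin N → Finset (Fin K))
    (α : Fin K → ℝ) (x : Fin K → ℕ) : ℝ :=
  Finset.univ.sup' (Finset.univ_nonempty_iff.mpr ⟨⟨0, hN⟩⟩) (schedWeight Sched α x)

/-- Lemma 1: for every `ε ∈ (0,1)`, for all states `x ∈ ℕ^K` except finitely many,
`∑_i p_i(x) log w_i(x) ≥ (1-ε) log w(x)` (terms with `w_i(x) = 0`, hence `p_i(x) = 0`,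
vanish, consistently with `Real.log 0 = 0`). -/
theorem lemma_one
    {K N : ℕ} (hK : 0 < K) (hN : 0 < N)
    (conflict : Fin K → Fin K → Prop)
    (hsymm : ∀ k l, conflict k l → conflict l k)
    (Sched : Fin N → Finset (Fin K))
    (hfeas : ∀ i, Feasible conflict (Sched i))
    (hinj : Function.Injective Sched)
    (hsurj : ∀ S : Finset (Fin K), Feasible conflict S → ∃ i, Sched i = S)
    (hS0 : Sched ⟨0, hN⟩ = ∅)
    (α : Fin K → ℝ) (hα : ∀ k, 0 < α k)
    (ε : ℝ) (hε0 : 0 < ε) (hε1 : ε < 1) :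
    ∃ A : Set (Fin K → ℕ), A.Finite ∧ ∀ x ∉ A,
      (1 - ε) * Real.log (maxWeight hN Sched α x) ≤
        ∑ i, schedProb Sched α x i * Real.log (schedWeight Sched α x i) := by
  classical
  set C : ℝ := Real.exp (N / ε) with hC
  refine ⟨Set.Iic (fun k => ⌈C / α k⌉₊), Set.finite_Iic _, ?_⟩
  intro x hx
  have hw0 : ∀ i, 0 ≤ schedWeight Sched α x i := fun i =>
    Finset.prod_nonneg (fun k _ => mul_nonneg (hα k).le (Nat.cast_nonneg _))
  set M := maxWeight hN Sched α x with hM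
  set Z := ∑ j, schedWeight Sched α x j with hZ
  have hle : ∀ i, schedWeight Sched α x i ≤ M := fun i =>
    Finset.le_sup' (schedWeight Sched α x) (Finset.mem_univ i)
  have hCM : C ≤ M := by
    rw [Set.mem_Iic, Pi.le_def] at hx
    push Not at hx
    obtain ⟨k, hk⟩ := hx
    have h1 : C / α k < x k := lt_of_le_of_lt (Nat.le_ceil _) (by exact_mod_cast hk)
    rw [div_lt_iff₀ (hα k)] at h1
    obtain ⟨i, hi⟩ := hsurj {k} (by
      intro a ha b hb hab
      rw [Finset.mem_singleton] at ha hb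
      exact absurd (ha.trans hb.symm) hab)
    have h2 := hle i
    simp only [schedWeight, hi, Finset.prod_singleton] at h2
    linarith
  have hMpos : 0 < M := lt_of_lt_of_le (Real.exp_pos _) hCM
  have hMZ : M ≤ Z :=
    Finset.sup'_le _ _ (fun i _ => Finset.single_le_sum (fun j _ => hw0 j) (Finset.mem_univ i))
  have hZpos : 0 < Z := lt_of_lt_of_le hMpos hMZ
  have hlog : N ≤ ε * Real.log M := by
    have h := (Real.le_log_iff_exp_le hMpos).2 hCM
    rw [div_le_iff₀ hε0] at h
    linarith
  have hterm : ∀ i, schedWeight Sched α x i * Real.log M - M ≤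
      schedWeight Sched α x i * Real.log (schedWeight Sched α x i) := by
    intro i
    rcases (hw0 i).eq_or_lt with h | h
    · rw [← h]; simp [hMpos.le]
    · have h1 := Real.log_le_sub_one_of_pos (div_pos hMpos h)
      rw [Real.log_div hMpos.ne' h.ne'] at h1
      have h2 := mul_le_mul_of_nonneg_left h1 h.le
      have h3 : schedWeight Sched α x i * (M / schedWeight Sched α x i - 1)
          = M - schedWeight Sched α x i := by field_simp
      rw [h3] at h2
      linarith
  have hsum := Finset.sum_le_sum (fun i (_ : i ∈ Finset.univ) => hterm i)
  rw [Finset.sum_sub_distrib, ← Finset.sum_mul, ← hZ] at hsum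
  simp only [Finset.sum_const, Finset.card_univ, Fintype.card_fin, nsmul_eq_mul] at hsum
  have heq : ∑ i, schedProb Sched α x i * Real.log (schedWeight Sched α x i) =
      (∑ i, schedWeight Sched α x i * Real.log (schedWeight Sched α x i)) / Z := by
    rw [Finset.sum_div]
    refine Finset.sum_congr rfl (fun i _ => ?_)
    simp only [schedProb, ← hZ]
    ring
  rw [heq, le_div_iff₀ hZpos]
  have h4 : (N : ℝ) * M ≤ N * Z := mul_le_mul_of_nonneg_left hMZ (Nat.cast_nonneg _)
  have h5 := mul_le_mul_of_nonneg_right hlog hZpos.le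
  nlinarith

end FlowCSMA
end

section
/- Strictly positive representation of interior points of the capacity region: if ρ ∈ ℝ^K lies in the interior of the capacity region, then there exist ε ∈ (0, 1/2) and a probability vector (q_1,…,q_N) with q_i > 0 for every i = 1,…,N such that ρ_k = (1 − 2ε) φ̂_k Σ_{i: k ∈ S_i} q_i for all k = 1,…,K. -/
open scoped BigOperators

namespace FlowCSMA

/-- Strictly positive representation of interior points of the capacity region: if `ρ` lies
in the interior of the capacity region, then there exist `ε ∈ (0, 1/2)` and a probability
vector `(q_1,…,q_N)` with `q_i > 0` for every `i` such that
`ρ_k = (1 - 2ε) φ̂_k ∑_{i : k ∈ S_i} q_i` for all `k`. -/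
theorem interior_strictly_positive_representation
    {K N : ℕ} (hK : 0 < K) (hN : 0 < N)
    (conflict : Fin K → Fin K → Prop)
    (hsymm : ∀ k l, conflict k l → conflict l k)
    (Sched : Fin N → Finset (Fin K))
    (hfeas : ∀ i, Feasible conflict (Sched i))
    (hinj : Function.Injective Sched)
    (hsurj : ∀ S : Finset (Fin K), Feasible conflict S → ∃ i, Sched i = S)
    (hS0 : Sched ⟨0, hN⟩ = ∅)
    (φhat : Fin K → ℝ) (hφ : ∀ k, 0 < φhat k)
    (ρ : Fin K → ℝ)
    (hint : ρ ∈ interior (CapacityRegion Sched φhat)) :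
    ∃ ε : ℝ, 0 < ε ∧ ε < 1 / 2 ∧
      ∃ q : Fin N → ℝ, (∀ i, 0 < q i) ∧ (∑ i, q i) = 1 ∧
        ∀ k, ρ k = (1 - 2 * ε) * φhat k *
          ∑ i ∈ Finset.univ.filter (fun i => k ∈ Sched i), q i := by
  have hNR : (0 : ℝ) < N := by exact_mod_cast hN
  set c : Fin K → ℝ := fun k =>
    φhat k * ∑ i ∈ Finset.univ.filter (fun i => k ∈ Sched i), (1 / (N : ℝ)) with hc
  set f : ℝ → Fin K → ℝ := fun t k => (ρ k / (1 - 2 * t) - t * c k) / (1 - t) with hf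
  have hf0 : f 0 = ρ := by
    funext k
    simp [hf]
  have hcont : ContinuousAt f 0 := by
    rw [continuousAt_pi]
    intro k
    have h1 : ContinuousAt (fun t : ℝ => ρ k / (1 - 2 * t)) 0 :=
      ContinuousAt.div (by fun_prop) (by fun_prop) (by norm_num)
    exact ContinuousAt.div (h1.sub (by fun_prop)) (by fun_prop) (by norm_num)
  have hnhds : CapacityRegion Sched φhat ∈ nhds (f 0) := by
    rw [hf0]
    exact mem_interior_iff_mem_nhds.mp hint
  have hev := hcont.eventually hnhds
  obtain ⟨r, hr, hball⟩ := Metric.eventually_nhds_iff.mp hev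
  set t : ℝ := min (r / 2) (1 / 4) with ht
  have ht0 : 0 < t := by
    rw [ht]
    exact lt_min (by linarith) (by norm_num)
  have htr : t < r := lt_of_le_of_lt (min_le_left _ _) (by linarith)
  have ht4 : t ≤ 1 / 4 := min_le_right _ _
  have hmem : f t ∈ CapacityRegion Sched φhat := by
    apply hball
    rw [Real.dist_eq, sub_zero, abs_of_pos ht0]
    exact htr
  obtain ⟨p, hp0, hp1, hp⟩ := hmem
  refine ⟨t, ht0, by linarith, fun i => (1 - t) * p i + t * (1 / (N : ℝ)), ?_, ?_, ?_⟩
  · intro i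
    have h1 : 0 ≤ (1 - t) * p i := mul_nonneg (by linarith) (hp0 i)
    have h2 : 0 < t * (1 / (N : ℝ)) := by positivity
    linarith
  · rw [Finset.sum_add_distrib, ← Finset.mul_sum, hp1, ← Finset.mul_sum]
    have : (∑ _i : Fin N, (1 / (N : ℝ))) = 1 := by
      simp [hNR.ne']
    rw [this]
    ring
  · intro k
    rw [Finset.sum_add_distrib, ← Finset.mul_sum, ← Finset.mul_sum]
    have h := hp k
    have hck : c k = φhat k * ∑ i ∈ Finset.univ.filter (fun i => k ∈ Sched i),
      (1 / (N : ℝ)) := rfl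
    have hfk : f t k = (ρ k / (1 - 2 * t) - t * c k) / (1 - t) := rfl
    have h1 : (1 - t) ≠ 0 := by linarith
    have h2 : (1 - 2 * t) ≠ 0 := by linarith
    have h3 : (1 - 2 * t) * ((1 - t) * f t k + t * c k) = ρ k := by
      rw [hfk]
      field_simp
      ring
    rw [← h3, h, hck]
    ring

end FlowCSMA
end

section
/- Key drift bound in the proof of Theorem 1: suppose ε ∈ (0, 1/2) and (q_1,…,q_N) is a probability vector with q_i > 0 for all i such that ρ_k = (1 − 2ε) φ̂_k Σ_{i: k ∈ S_i} q_i for all k. Then for all states x ∈ ℕ^K except finitely many, G(x) ≤ −ε Σ_{i=1}^N q_i log w̃_i(x). -/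
open scoped BigOperators

namespace FlowCSMA

/-- Restricted schedule weight `w̃_i(x) = ∏_{k ∈ S_i, x_k > 0} α_k x_k`
(with the empty product equal to 1). -/
noncomputable def restWeight {K N : ℕ} (Sched : Fin N → Finset (Fin K)) (α : Fin K → ℝ)
    (x : Fin K → ℕ) (i : Fin N) : ℝ :=
  ∏ k ∈ (Sched i).filter (fun k => 0 < x k), α k * (x k : ℝ)

/-- `G(x) = ∑_{k : x_k > 0} ((ρ_k - φ_k(x))/φ̂_k) log(α_k x_k)`. -/
noncomputable def G {K N : ℕ} (Sched : Fin N → Finset (Fin K)) (α φhat ρ : Fin K → ℝ)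
    (x : Fin K → ℕ) : ℝ :=
  ∑ k ∈ Finset.univ.filter (fun k => 0 < x k),
    ((ρ k - throughput Sched α φhat x k) / φhat k) * Real.log (α k * (x k : ℝ))

/-- Key drift bound in the proof of Theorem 1: if `ε ∈ (0,1/2)` and `(q_i)` is a strictly
positive probability vector with `ρ_k = (1-2ε) φ̂_k ∑_{i : k ∈ S_i} q_i` for all `k`, then
for all states `x` except finitely many, `G(x) ≤ -ε ∑_i q_i log w̃_i(x)`. -/
theorem key_drift_bound
    {K N : ℕ} (hK : 0 < K) (hN : 0 < N)
    (conflict : Fin K → Fin K → Prop)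
    (hsymm : ∀ k l, conflict k l → conflict l k)
    (Sched : Fin N → Finset (Fin K))
    (hfeas : ∀ i, Feasible conflict (Sched i))
    (hinj : Function.Injective Sched)
    (hsurj : ∀ S : Finset (Fin K), Feasible conflict S → ∃ i, Sched i = S)
    (hS0 : Sched ⟨0, hN⟩ = ∅)
    (α φhat : Fin K → ℝ) (hα : ∀ k, 0 < α k) (hφ : ∀ k, 0 < φhat k)
    (ε : ℝ) (hε0 : 0 < ε) (hε1 : ε < 1 / 2)
    (q : Fin N → ℝ) (hq : ∀ i, 0 < q i) (hq1 : (∑ i, q i) = 1)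
    (ρ : Fin K → ℝ) (hρ : ∀ k, 0 < ρ k)
    (hrep : ∀ k, ρ k = (1 - 2 * ε) * φhat k *
      ∑ i ∈ Finset.univ.filter (fun i => k ∈ Sched i), q i) :
    ∃ A : Set (Fin K → ℕ), A.Finite ∧ ∀ x ∉ A,
      G Sched α φhat ρ x ≤ -ε * ∑ i, q i * Real.log (restWeight Sched α x i) := by
  classical
  set C : ℝ := Real.exp (N / ε) with hC
  refine ⟨{x | ∀ k, α k * (x k : ℝ) ≤ C}, ?_, ?_⟩
  · apply (Set.finite_Iic (fun k => ⌈C / α k⌉₊)).subset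
    intro x hx k
    have h1 : α k * (x k : ℝ) ≤ C := hx k
    have h2 : (x k : ℝ) ≤ C / α k := by
      rw [le_div_iff₀ (hα k)]; linarith
    exact_mod_cast h2.trans (Nat.le_ceil _)
  intro x hx
  simp only [Set.mem_setOf_eq, not_forall, not_le] at hx
  obtain ⟨k0, hk0⟩ := hx
  set Z : ℝ := ∑ j, schedWeight Sched α x j with hZ
  have hw0 : ∀ i, 0 ≤ schedWeight Sched α x i := fun i =>
    Finset.prod_nonneg fun k _ => mul_nonneg (hα k).le (Nat.cast_nonneg _)
  have hwZ : ∀ i, schedWeight Sched α x i ≤ Z := fun i =>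
    Finset.single_le_sum (f := fun j => schedWeight Sched α x j)
      (fun j _ => hw0 j) (Finset.mem_univ i)
  have hZC : C ≤ Z := by
    obtain ⟨i, hi⟩ := hsurj {k0} (by
      intro k hk l hl hkl
      simp only [Finset.mem_singleton] at hk hl
      exact absurd (hk.trans hl.symm) hkl)
    have h := hwZ i
    simp only [schedWeight, hi, Finset.prod_singleton] at h
    linarith
  have hCpos : 0 < C := Real.exp_pos _
  have hZpos : 0 < Z := hCpos.trans_le hZC
  have hlogZ : (N : ℝ) ≤ ε * Real.log Z := by
    have h : (N : ℝ) / ε ≤ Real.log Z := (Real.le_log_iff_exp_le hZpos).2 hZC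
    rw [div_le_iff₀ hε0] at h
    linarith
  have hrpos : ∀ i, 0 < restWeight Sched α x i := fun i =>
    Finset.prod_pos fun k hk => mul_pos (hα k)
      (Nat.cast_pos.2 (Finset.mem_filter.1 hk).2)
  have hrZ : ∀ i, restWeight Sched α x i ≤ Z := by
    intro i
    obtain ⟨j, hj⟩ := hsurj ((Sched i).filter (fun k => 0 < x k)) (by
      intro k hk l hl hkl
      exact hfeas i k (Finset.mem_filter.1 hk).1 l (Finset.mem_filter.1 hl).1 hkl)
    have h := hwZ j
    simp only [schedWeight, hj] at h
    exact h
  have hlogr : ∀ i, Real.log (restWeight Sched α x i)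
      = ∑ k ∈ Finset.univ.filter (fun k => 0 < x k),
          if k ∈ Sched i then Real.log (α k * (x k : ℝ)) else 0 := by
    intro i
    unfold restWeight
    rw [Real.log_prod]
    · rw [← Finset.sum_filter]
      apply Finset.sum_congr _ (fun _ _ => rfl)
      ext k
      simp [and_comm]
    · intro k hk
      exact (mul_pos (hα k) (Nat.cast_pos.2 (Finset.mem_filter.1 hk).2)).ne'
  have hswap : ∀ c : Fin N → ℝ, ∑ i, c i * Real.log (restWeight Sched α x i)
      = ∑ k ∈ Finset.univ.filter (fun k => 0 < x k),
        (∑ i ∈ Finset.univ.filter (fun i => k ∈ Sched i), c i)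
          * Real.log (α k * (x k : ℝ)) := by
    intro c
    simp_rw [hlogr, Finset.mul_sum]
    rw [Finset.sum_comm]
    apply Finset.sum_congr rfl
    intro k _
    rw [Finset.sum_mul, Finset.sum_filter]
    apply Finset.sum_congr rfl
    intro i _
    split_ifs <;> simp
  have hG : G Sched α φhat ρ x
      = (1 - 2 * ε) * ∑ i, q i * Real.log (restWeight Sched α x i)
        - ∑ i, schedProb Sched α x i * Real.log (restWeight Sched α x i) := by
    rw [hswap, hswap, Finset.mul_sum, ← Finset.sum_sub_distrib]
    unfold G
    apply Finset.sum_congr rfl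
    intro k _
    have := (hφ k).ne'
    rw [hrep k]
    unfold throughput
    field_simp
  have hQ : ∑ i, q i * Real.log (restWeight Sched α x i) ≤ Real.log Z := by
    calc _ ≤ ∑ i, q i * Real.log Z := Finset.sum_le_sum fun i _ =>
            mul_le_mul_of_nonneg_left (Real.log_le_log (hrpos i) (hrZ i)) (hq i).le
      _ = Real.log Z := by rw [← Finset.sum_mul, hq1, one_mul]
  have hp1 : ∑ i, schedProb Sched α x i = 1 := by
    unfold schedProb
    rw [← Finset.sum_div, div_self hZpos.ne']
  have hP : Real.log Z + 1 - N ≤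
      ∑ i, schedProb Sched α x i * Real.log (restWeight Sched α x i) := by
    have hterm : ∀ i, schedProb Sched α x i * Real.log Z + schedProb Sched α x i - 1
        ≤ schedProb Sched α x i * Real.log (restWeight Sched α x i) := by
      intro i
      rcases (hw0 i).eq_or_lt with h | h
      · have : schedProb Sched α x i = 0 := by
          unfold schedProb; rw [← h, zero_div]
        rw [this]; norm_num
      · have hwr : restWeight Sched α x i = schedProb Sched α x i * Z := by
          have h1 : schedProb Sched α x i * Z = schedWeight Sched α x i := by
            unfold schedProb
            exact div_mul_cancel₀ _ hZpos.ne'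
          rw [h1]
          unfold restWeight schedWeight
          rw [Finset.filter_true_of_mem]
          intro k hk
          rw [Nat.pos_iff_ne_zero]
          intro hk0
          apply h.ne'
          exact Finset.prod_eq_zero hk (by simp [hk0])
        have hp : 0 < schedProb Sched α x i := div_pos h hZpos
        rw [hwr, Real.log_mul hp.ne' hZpos.ne']
        have h2 := Real.one_sub_inv_le_log_of_pos hp
        have h3 := mul_le_mul_of_nonneg_left h2 hp.le
        rw [mul_sub, mul_inv_cancel₀ hp.ne'] at h3
        linarith
    have h4 := Finset.sum_le_sum fun i (_ : i ∈ Finset.univ) => hterm i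
    rw [Finset.sum_sub_distrib, Finset.sum_add_distrib, ← Finset.sum_mul, hp1] at h4
    simpa using h4
  rw [hG]
  have h5 := mul_le_mul_of_nonneg_left hQ (by linarith : (0 : ℝ) ≤ 1 - ε)
  linarith

end FlowCSMA
end

section
/- Divergence of the weighted log-weight: if (q_1,…,q_N) is a probability vector with q_i > 0 for all i = 1,…,N, then Σ_{i=1}^N q_i log w̃_i(x) → +∞ as Σ_{k=1}^K x_k → ∞; equivalently, for every M > 0 there are only finitely many states x ∈ ℕ^K with Σ_i q_i log w̃_i(x) < M. -/
open scoped BigOperators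

namespace FlowCSMA

/-- Divergence of the weighted log-weight: if `(q_i)` is a strictly positive probability
vector, then `∑_i q_i log w̃_i(x) → +∞` as `∑_k x_k → ∞`; equivalently, for every `M > 0`
only finitely many states satisfy `∑_i q_i log w̃_i(x) < M`. -/
theorem weighted_log_weight_diverges
    {K N : ℕ} (hK : 0 < K) (hN : 0 < N)
    (conflict : Fin K → Fin K → Prop)
    (hsymm : ∀ k l, conflict k l → conflict l k)
    (Sched : Fin N → Finset (Fin K))
    (hfeas : ∀ i, Feasible conflict (Sched i))
    (hinj : Function.Injective Sched)
    (hsurj : ∀ S : Finset (Fin K), Feasible conflict S → ∃ i, Sched i = S)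
    (hS0 : Sched ⟨0, hN⟩ = ∅)
    (hsing : ∀ k : Fin K, ∃ i, Sched i = {k})
    (α : Fin K → ℝ) (hα : ∀ k, 0 < α k)
    (q : Fin N → ℝ) (hq : ∀ i, 0 < q i) (hq1 : (∑ i, q i) = 1) :
    ∀ M : ℝ, 0 < M →
      {x : Fin K → ℕ | ∑ i, q i * Real.log (restWeight Sched α x i) < M}.Finite := by
  intro M _
  set p : Fin K → ℝ := fun k => ∑ i, if k ∈ Sched i then q i else 0 with hp
  have hp0 : ∀ k, 0 < p k := by
    intro k
    obtain ⟨i, hi⟩ := hsing k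
    apply Finset.sum_pos'
    · intro j _
      split_ifs
      · exact (hq j).le
      · exact le_rfl
    · exact ⟨i, Finset.mem_univ _, by simp [hi, hq i]⟩
  have hlog : ∀ x i, Real.log (restWeight Sched α x i)
      = ∑ k, if k ∈ Sched i then Real.log (α k * (x k : ℝ)) else 0 := by
    intro x i
    unfold restWeight
    rw [Real.log_prod, Finset.sum_filter, ← Finset.sum_filter, ← Finset.sum_filter,
      Finset.filter_mem_eq_inter, Finset.univ_inter]
    · rw [Finset.sum_filter]
      apply Finset.sum_congr rfl
      intro k _
      split_ifs with h
      · rfl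
      · have : x k = 0 := by omega
        simp [this]
    · intro k hk
      have h := (Finset.mem_filter.1 hk).2
      have h2 : (0 : ℝ) < x k := by exact_mod_cast h
      exact (mul_pos (hα k) h2).ne'
  have hF : ∀ x : Fin K → ℕ, ∑ i, q i * Real.log (restWeight Sched α x i)
      = ∑ k, p k * Real.log (α k * (x k : ℝ)) := by
    intro x
    simp only [hlog, hp, Finset.mul_sum, Finset.sum_mul]
    rw [Finset.sum_comm]
    refine Finset.sum_congr rfl fun k _ => Finset.sum_congr rfl fun i _ => ?_
    split_ifs <;> simp
  have hB : ∀ k (n : ℕ), - (p k * |Real.log (α k)|) ≤ p k * Real.log (α k * (n : ℝ)) := by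
    intro k n
    rw [← mul_neg]
    apply mul_le_mul_of_nonneg_left _ (hp0 k).le
    rcases Nat.eq_zero_or_pos n with h | h
    · simp [h]
    · have h2 : (1 : ℝ) ≤ n := by exact_mod_cast h
      rw [Real.log_mul (hα k).ne' (by positivity)]
      have := Real.log_nonneg h2
      have := neg_abs_le (Real.log (α k))
      linarith
  set C : ℝ := M + ∑ k, p k * |Real.log (α k)| with hC
  have hfin : ∀ k, {n : ℕ | p k * Real.log (α k * (n : ℝ)) < C}.Finite := by
    intro k
    have ht : Filter.Tendsto (fun n : ℕ => p k * Real.log (α k * (n : ℝ)))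
        Filter.atTop Filter.atTop :=
      (Real.tendsto_log_atTop.comp
        (tendsto_natCast_atTop_atTop.const_mul_atTop (hα k))).const_mul_atTop (hp0 k)
    have := ht.eventually_ge_atTop C
    rw [← Nat.cofinite_eq_atTop, Filter.eventually_cofinite] at this
    simpa using this
  refine (Set.Finite.pi' hfin).subset ?_
  intro x hx k
  simp only [Set.mem_ofPred_eq] at hx ⊢
  rw [hF] at hx
  have h1 : p k * Real.log (α k * (x k : ℝ)) + p k * |Real.log (α k)|
      ≤ ∑ k, (p k * Real.log (α k * (x k : ℝ)) + p k * |Real.log (α k)|) :=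
    Finset.single_le_sum (f := fun k => p k * Real.log (α k * (x k : ℝ)) + p k * |Real.log (α k)|)
      (fun j _ => by have := hB j (x j); linarith) (Finset.mem_univ k)
  rw [Finset.sum_add_distrib] at h1
  have h2 : 0 ≤ p k * |Real.log (α k)| := mul_nonneg (hp0 k).le (abs_nonneg _)
  linarith

end FlowCSMA
end

section
/- Eventual negativity of G: if ρ lies in the interior of the capacity region, then for every M > 0 there is a finite set A ⊆ ℕ^K such that G(x) ≤ −M for all x ∉ A; that is, G(x) → −∞ as Σ_{k=1}^K x_k → ∞. -/
open scoped BigOperators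

namespace FlowCSMA

lemma swap_sum {K N : ℕ} (Sched : Fin N → Finset (Fin K)) (p : Fin N → ℝ) (a : Fin K → ℝ) :
    ∑ k, (∑ i ∈ Finset.univ.filter (fun i => k ∈ Sched i), p i) * a k
      = ∑ i, p i * ∑ k ∈ Sched i, a k := by
  simp_rw [Finset.sum_mul, Finset.mul_sum, Finset.sum_filter]
  rw [Finset.sum_comm]
  refine Finset.sum_congr rfl fun i _ => ?_
  rw [← Finset.sum_filter]
  simp

lemma G_bound
    {K N : ℕ} (hN : 0 < N)
    (conflict : Fin K → Fin K → Prop)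
    (Sched : Fin N → Finset (Fin K))
    (hfeas : ∀ i, Feasible conflict (Sched i))
    (hsurj : ∀ S : Finset (Fin K), Feasible conflict S → ∃ i, Sched i = S)
    (hS0 : Sched ⟨0, hN⟩ = ∅)
    (α φhat : Fin K → ℝ) (hα : ∀ k, 0 < α k) (hφ : ∀ k, 0 < φhat k)
    (ρ : Fin K → ℝ) (δ : ℝ) (hδ : 0 < δ)
    (hball : ∀ r : Fin K → ℝ, (∀ k, |r k - ρ k| ≤ δ) → r ∈ CapacityRegion Sched φhat)
    (x : Fin K → ℕ) (a : Fin K → ℝ)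
    (ha : a = fun k => if 0 < x k then Real.log (α k * (x k : ℝ)) else 0) :
    G Sched α φhat ρ x ≤ N - ∑ k, δ / φhat k * |a k| := by
  set W := ∑ j, schedWeight Sched α x j with hW
  have hw0 : ∀ i, 0 ≤ schedWeight Sched α x i := fun i =>
    Finset.prod_nonneg fun k _ => mul_nonneg (hα k).le (Nat.cast_nonneg _)
  have hwW : ∀ i, schedWeight Sched α x i ≤ W := fun i =>
    Finset.single_le_sum (f := schedWeight Sched α x) (fun j _ => hw0 j) (Finset.mem_univ i)
  have hWpos : 0 < W := by
    have h1 : schedWeight Sched α x ⟨0, hN⟩ = 1 := by simp [schedWeight, hS0]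
    have := hwW ⟨0, hN⟩
    linarith
  -- log-weights
  have hlog : ∀ i, (∀ k ∈ Sched i, 0 < x k) →
      0 < schedWeight Sched α x i ∧ Real.log (schedWeight Sched α x i) = ∑ k ∈ Sched i, a k := by
    intro i hi
    have hpos : ∀ k ∈ Sched i, 0 < α k * (x k : ℝ) := fun k hk =>
      mul_pos (hα k) (Nat.cast_pos.mpr (hi k hk))
    refine ⟨Finset.prod_pos hpos, ?_⟩
    unfold schedWeight
    rw [Real.log_prod fun k hk => (hpos k hk).ne']
    refine Finset.sum_congr rfl fun k hk => ?_
    simp [ha, hi k hk]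
  have hup : ∀ i, ∑ k ∈ Sched i, a k ≤ Real.log W := by
    intro i
    obtain ⟨j, hj⟩ := hsurj ((Sched i).filter (fun k => 0 < x k)) (by
      intro k hk l hl
      exact hfeas i k (Finset.mem_filter.mp hk).1 l (Finset.mem_filter.mp hl).1)
    obtain ⟨h1, h2⟩ := hlog j (by
      intro k hk
      rw [hj] at hk
      exact (Finset.mem_filter.mp hk).2)
    have h3 : ∑ k ∈ Sched i, a k = ∑ k ∈ Sched j, a k := by
      rw [hj, Finset.sum_filter]
      refine Finset.sum_congr rfl fun k _ => ?_
      by_cases h : 0 < x k <;> simp [ha, h]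
    rw [h3, ← h2]
    exact Real.log_le_log h1 (hwW j)
  set p := schedProb Sched α x with hp
  have hpsum : ∑ i, p i = 1 := by
    simp only [hp, schedProb]
    rw [← Finset.sum_div, div_self hWpos.ne']
  have hplow : ∀ i, p i * Real.log W - 1 ≤ p i * ∑ k ∈ Sched i, a k := by
    intro i
    by_cases hi : ∀ k ∈ Sched i, 0 < x k
    · obtain ⟨h1, h2⟩ := hlog i hi
      have hpi : 0 < p i := div_pos h1 hWpos
      have h3 : Real.log (p i) = ∑ k ∈ Sched i, a k - Real.log W := by
        rw [← h2]
        exact Real.log_div h1.ne' hWpos.ne'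
      have h4 := Real.one_sub_inv_le_log_of_pos hpi
      have h5 := mul_le_mul_of_nonneg_left h4 hpi.le
      rw [mul_sub, mul_inv_cancel₀ hpi.ne', h3] at h5
      linarith
    · push Not at hi
      obtain ⟨k, hk, hk0⟩ := hi
      have : schedWeight Sched α x i = 0 :=
        Finset.prod_eq_zero hk (by simp [Nat.le_zero.mp hk0])
      have : p i = 0 := by simp [hp, schedProb, this]
      simp [this]
  have hlow : Real.log W - N ≤ ∑ i, p i * ∑ k ∈ Sched i, a k := by
    have := Finset.sum_le_sum fun i (_ : i ∈ Finset.univ) => hplow i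
    rw [Finset.sum_sub_distrib, ← Finset.sum_mul, hpsum] at this
    simpa using this
  -- the perturbed point
  set s : Fin K → ℝ := fun k => if 0 ≤ a k then 1 else -1 with hs
  have hsa : ∀ k, s k * a k = |a k| := by
    intro k
    by_cases h : 0 ≤ a k
    · simp [hs, h, abs_of_nonneg h]
    · simp [hs, h, abs_of_neg (not_le.mp h)]
  obtain ⟨q, hq0, hq1, hq⟩ := hball (fun k => ρ k + δ * s k) (by
    intro k
    by_cases h : 0 ≤ a k <;> simp [hs, h, abs_of_pos hδ])
  have hqu : ∑ i, q i * ∑ k ∈ Sched i, a k ≤ Real.log W := by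
    calc _ ≤ ∑ i, q i * Real.log W :=
          Finset.sum_le_sum fun i _ => mul_le_mul_of_nonneg_left (hup i) (hq0 i)
      _ = _ := by rw [← Finset.sum_mul, hq1, one_mul]
  rw [← swap_sum] at hqu hlow
  have hG : G Sched α φhat ρ x = ∑ k, (∑ i ∈ Finset.univ.filter (fun i => k ∈ Sched i), q i) * a k
      - ∑ k, δ / φhat k * |a k|
      - ∑ k, (∑ i ∈ Finset.univ.filter (fun i => k ∈ Sched i), p i) * a k := by
    unfold G
    rw [Finset.sum_filter, ← Finset.sum_sub_distrib, ← Finset.sum_sub_distrib]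
    refine Finset.sum_congr rfl fun k _ => ?_
    have h1 : (if 0 < x k then ((ρ k - throughput Sched α φhat x k) / φhat k) *
        Real.log (α k * (x k : ℝ)) else 0) =
        ((ρ k - throughput Sched α φhat x k) / φhat k) * a k := by
      by_cases h : 0 < x k <;> simp [ha, h]
    rw [h1, ← hsa k]
    unfold throughput
    have h2 := hq k
    simp only at h2
    have h3 : ρ k = φhat k * (∑ i ∈ Finset.univ.filter (fun i => k ∈ Sched i), q i) - δ * s k := by
      linarith
    rw [h3]
    have := (hφ k).ne'
    field_simp
    ring
  rw [hG]
  linarith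

/-- Eventual negativity of `G`: if `ρ` lies in the interior of the capacity region, then
for every `M > 0` there is a finite set `A ⊆ ℕ^K` with `G(x) ≤ -M` for all `x ∉ A`;
that is, `G(x) → -∞` as `∑_k x_k → ∞`. -/
theorem G_tendsto_neg_infty
    {K N : ℕ} (hK : 0 < K) (hN : 0 < N)
    (conflict : Fin K → Fin K → Prop)
    (hsymm : ∀ k l, conflict k l → conflict l k)
    (Sched : Fin N → Finset (Fin K))
    (hfeas : ∀ i, Feasible conflict (Sched i))
    (hinj : Function.Injective Sched)
    (hsurj : ∀ S : Finset (Fin K), Feasible conflict S → ∃ i, Sched i = S)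
    (hS0 : Sched ⟨0, hN⟩ = ∅)
    (α φhat : Fin K → ℝ) (hα : ∀ k, 0 < α k) (hφ : ∀ k, 0 < φhat k)
    (ρ : Fin K → ℝ) (hρ : ∀ k, 0 < ρ k)
    (hint : ρ ∈ interior (CapacityRegion Sched φhat)) :
    ∀ M : ℝ, 0 < M → ∃ A : Set (Fin K → ℕ), A.Finite ∧
      ∀ x ∉ A, G Sched α φhat ρ x ≤ -M := by
  intro M hM
  obtain ⟨ε, hε, hsub⟩ := Metric.mem_nhds_iff.mp (mem_interior_iff_mem_nhds.mp hint)
  have hδ : 0 < ε / 2 := half_pos hε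
  have hball : ∀ r : Fin K → ℝ, (∀ k, |r k - ρ k| ≤ ε / 2) → r ∈ CapacityRegion Sched φhat := by
    intro r hr
    apply hsub
    rw [Metric.mem_ball]
    refine lt_of_le_of_lt ((dist_pi_le_iff hδ.le).mpr fun k => ?_) (half_lt_self hε)
    rw [Real.dist_eq]
    exact hr k
  let C : Fin K → ℝ := fun k => (M + N) / (ε / 2 / φhat k)
  let b : Fin K → ℕ := fun k => ⌈Real.exp (C k) / α k⌉₊
  refine ⟨Set.Iic b, Set.finite_Iic b, fun x hx => ?_⟩
  rw [Set.mem_Iic, Pi.le_def] at hx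
  push Not at hx
  obtain ⟨k, hk⟩ := hx
  have h := G_bound hN conflict Sched hfeas hsurj hS0 α φhat hα hφ ρ (ε / 2) hδ hball x _ rfl
  have hxk : 0 < x k := lt_of_le_of_lt (Nat.zero_le _) hk
  have h1 : Real.exp (C k) / α k < x k := lt_of_le_of_lt (Nat.le_ceil _) (Nat.cast_lt.mpr hk)
  rw [div_lt_iff₀ (hα k), mul_comm] at h1
  have h2 : C k < Real.log (α k * (x k : ℝ)) :=
    (Real.lt_log_iff_exp_lt (lt_trans (Real.exp_pos _) h1)).mpr h1
  have hd : 0 < ε / 2 / φhat k := div_pos hδ (hφ k)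
  have h3 : M + N < ε / 2 / φhat k * Real.log (α k * (x k : ℝ)) := by
    rw [div_lt_iff₀ hd] at h2
    linarith
  have h4 := Finset.single_le_sum
    (f := fun k => ε / 2 / φhat k * |if 0 < x k then Real.log (α k * (x k : ℝ)) else 0|)
    (fun j _ => mul_nonneg (div_pos hδ (hφ j)).le (abs_nonneg _)) (Finset.mem_univ k)
  simp only [hxk, if_true] at h4
  have h5 := mul_le_mul_of_nonneg_left (le_abs_self (Real.log (α k * (x k : ℝ)))) hd.le
  linarith

end FlowCSMA
end

section
/- Mean throughput of a single link under flow-aware CSMA with α_1 = 1: for ρ ∈ (0,1), the stationary distribution π(n) ∝ (n+1)ρⁿ on ℕ (that of a processor-sharing queue with one permanent customer) has mean Σ_{n≥0} n π(n) / Σ_{n≥0} π(n) = Σ_{n≥0} n(n+1)ρⁿ / Σ_{n≥0} (n+1)ρⁿ = 2ρ/(1−ρ); consequently the mean throughput γ_1 = ρ / (2ρ/(1−ρ)) equals (1−ρ)/2. -/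
open scoped BigOperators

namespace FlowCSMA

/-- Mean throughput of a single link under flow-aware CSMA with `α_1 = 1`: for
`ρ ∈ (0,1)`, the stationary distribution `π(n) ∝ (n+1)ρⁿ` has mean
`∑ n(n+1)ρⁿ / ∑ (n+1)ρⁿ = 2ρ/(1-ρ)`, and consequently the mean throughput
`γ_1 = ρ / (2ρ/(1-ρ))` equals `(1-ρ)/2`. -/
theorem single_link_mean_throughput_alpha_one (ρ : ℝ) (hρ0 : 0 < ρ) (hρ1 : ρ < 1) :
    (∑' n : ℕ, (n : ℝ) * ((n : ℝ) + 1) * ρ ^ n) / (∑' n : ℕ, ((n : ℝ) + 1) * ρ ^ n) =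
      2 * ρ / (1 - ρ) ∧
    ρ / (2 * ρ / (1 - ρ)) = (1 - ρ) / 2 := by
  have hn : ‖ρ‖ < 1 := by rw [Real.norm_eq_abs, abs_of_pos hρ0]; exact hρ1
  have hne : (1 - ρ) ≠ 0 := by linarith
  have hρ : ρ ≠ 0 := hρ0.ne'
  have h1 : HasSum (fun n : ℕ => ((n : ℝ) + 1) * ρ ^ n) (1 / (1 - ρ) ^ 2) := by
    simpa using hasSum_choose_mul_geometric_of_norm_lt_one 1 hn
  have h2 : HasSum (fun n : ℕ => (n : ℝ) * ((n : ℝ) + 1) * ρ ^ n)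
      (2 * (1 / (1 - ρ) ^ (2 + 1)) - 2 * (1 / (1 - ρ) ^ 2)) := by
    have h3 := ((hasSum_choose_mul_geometric_of_norm_lt_one 2 hn).mul_left 2).sub
      (h1.mul_left 2)
    refine (congrArg (fun f : ℕ → ℝ => HasSum f _) (funext fun n => ?_)).mpr h3
    rw [Nat.cast_choose_two]
    push_cast
    ring
  rw [h1.tsum_eq, h2.tsum_eq]
  constructor
  · field_simp
    ring
  · field_simp

end FlowCSMA
end

section
/- Light-traffic limit of the single-link mean throughput: for fixed α > 0, let π_ρ(x) = ∏_{n=1}^x ρ(1+αn)/(αn) for ρ ∈ (0,1) and let E(ρ) = Σ_{x≥0} x π_ρ(x) / Σ_{x≥0} π_ρ(x) be the stationary mean number of flows. Then the mean throughput γ_1(ρ) = ρ/E(ρ) satisfies γ_1(ρ) → α/(1+α) as ρ → 0⁺. -/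
open scoped BigOperators

namespace FlowCSMA

/-- Stationary measure of the number of active flows on a single link:
`π_ρ(x) = ∏_{n=1}^x ρ(1+αn)/(αn)`, with `π_ρ(0) = 1`. -/
noncomputable def statMeasure (α ρ : ℝ) (x : ℕ) : ℝ :=
  ∏ n ∈ Finset.Icc 1 x, ρ * (1 + α * (n : ℝ)) / (α * (n : ℝ))

/-- Stationary mean number of flows `E(ρ) = ∑ x π_ρ(x) / ∑ π_ρ(x)`. -/
noncomputable def meanFlows (α ρ : ℝ) : ℝ :=
  (∑' x : ℕ, (x : ℝ) * statMeasure α ρ x) / (∑' x : ℕ, statMeasure α ρ x)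

lemma sm_eq (α ρ : ℝ) (x : ℕ) : statMeasure α ρ x = ρ ^ x * statMeasure α 1 x := by
  unfold statMeasure
  have : ∀ n ∈ Finset.Icc 1 x, ρ * (1 + α * (n : ℝ)) / (α * (n : ℝ))
      = ρ * (1 * (1 + α * (n : ℝ)) / (α * (n : ℝ))) := by
    intro n _
    ring
  rw [Finset.prod_congr rfl this, Finset.prod_mul_distrib]
  simp

lemma sm_nonneg (α : ℝ) (hα : 0 < α) (x : ℕ) : 0 ≤ statMeasure α 1 x := by
  unfold statMeasure
  exact Finset.prod_nonneg fun n _ => by positivity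

lemma sm_le (α : ℝ) (hα : 0 < α) (x : ℕ) : statMeasure α 1 x ≤ ((1 + α) / α) ^ x := by
  unfold statMeasure
  calc _ ≤ ∏ n ∈ Finset.Icc 1 x, ((1 + α) / α) := by
        refine Finset.prod_le_prod (fun n _ => by positivity) ?_
        intro n hn
        have h1 : (1 : ℝ) ≤ n := by exact_mod_cast (Finset.mem_Icc.1 hn).1
        rw [div_le_div_iff₀ (by positivity) hα]
        nlinarith
    _ = _ := by rw [Finset.prod_const, Nat.card_Icc, Nat.add_sub_cancel]

lemma pow_bd (K ρ : ℝ) (hK : 0 < K) (h0 : 0 ≤ ρ) (h : ρ ≤ 1 / (2 * K)) (x : ℕ) :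
    ρ ^ x * K ^ x ≤ (1 / 2) ^ x := by
  rw [← mul_pow]
  refine pow_le_pow_left₀ (by positivity) ?_ x
  calc ρ * K ≤ 1 / (2 * K) * K := by gcongr
    _ = 1 / 2 := by field_simp

/-- Light-traffic limit of the single-link mean throughput: for fixed `α > 0`, the mean
throughput `γ_1(ρ) = ρ / E(ρ)` tends to `α/(1+α)` as `ρ → 0⁺` (within `(0,1)`). -/
theorem light_traffic_limit (α : ℝ) (hα : 0 < α) :
    Filter.Tendsto (fun ρ : ℝ => ρ / meanFlows α ρ)
      (nhdsWithin 0 (Set.Ioo 0 1)) (nhds (α / (1 + α))) := by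
  have hK : 0 < (1 + α) / α := by positivity
  set K := (1 + α) / α with hKdef
  have hev : ∀ᶠ ρ in nhdsWithin (0:ℝ) (Set.Ioo 0 1), 0 < ρ ∧ ρ ≤ 1 / (2 * K) := by
    have h1 : ∀ᶠ ρ in nhdsWithin (0:ℝ) (Set.Ioo 0 1), ρ ∈ Set.Ioo (0:ℝ) 1 :=
      self_mem_nhdsWithin
    have h2 : ∀ᶠ ρ in nhdsWithin (0:ℝ) (Set.Ioo 0 1), ρ < 1 / (2 * K) :=
      mem_nhdsWithin_of_mem_nhds (Iio_mem_nhds (by positivity))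
    filter_upwards [h1, h2] with ρ a b
    exact ⟨a.1, b.le⟩
  have hZ : Filter.Tendsto (fun ρ : ℝ => ∑' x : ℕ, ρ ^ x * statMeasure α 1 x)
      (nhdsWithin 0 (Set.Ioo 0 1)) (nhds (∑' x : ℕ, (0:ℝ) ^ x * statMeasure α 1 x)) := by
    refine tendsto_tsum_of_dominated_convergence (bound := fun x : ℕ => (1 / 2 : ℝ) ^ x)
      summable_geometric_two ?_ ?_
    · intro x
      have : Continuous (fun ρ : ℝ => ρ ^ x * statMeasure α 1 x) := by fun_prop
      exact (this.tendsto 0).mono_left nhdsWithin_le_nhds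
    · filter_upwards [hev] with ρ h x
      have hc := sm_nonneg α hα x
      rw [Real.norm_of_nonneg (mul_nonneg (pow_nonneg h.1.le _) hc)]
      exact (mul_le_mul_of_nonneg_left (sm_le α hα x) (pow_nonneg h.1.le _)).trans
        (pow_bd K ρ hK h.1.le h.2 x)
  have hsum : Summable (fun x : ℕ => (x : ℝ) ^ 1 * (1 / 2 : ℝ) ^ x) := by
    have hn : ‖(1 / 2 : ℝ)‖ < 1 := by
      rw [Real.norm_of_nonneg (by norm_num)]
      norm_num
    exact summable_pow_mul_geometric_of_norm_lt_one 1 hn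
  have hM : Filter.Tendsto (fun ρ : ℝ => ∑' x : ℕ, (x : ℝ) * (ρ ^ (x - 1) * statMeasure α 1 x))
      (nhdsWithin 0 (Set.Ioo 0 1))
      (nhds (∑' x : ℕ, (x : ℝ) * ((0:ℝ) ^ (x - 1) * statMeasure α 1 x))) := by
    refine tendsto_tsum_of_dominated_convergence
      (bound := fun x : ℕ => (2 * K) * ((x : ℝ) ^ 1 * (1 / 2 : ℝ) ^ x))
      (hsum.mul_left (2 * K)) ?_ ?_
    · intro x
      have : Continuous (fun ρ : ℝ => (x : ℝ) * (ρ ^ (x - 1) * statMeasure α 1 x)) := by fun_prop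
      exact (this.tendsto 0).mono_left nhdsWithin_le_nhds
    · filter_upwards [hev] with ρ h x
      have hc := sm_nonneg α hα x
      have hp := pow_nonneg h.1.le (x - 1)
      rw [Real.norm_of_nonneg (by positivity)]
      rcases x with _ | x
      · simp
      · have h1 := sm_le α hα (x + 1)
        have h2 := pow_bd K ρ hK h.1.le h.2 x
        simp only [Nat.add_sub_cancel] at hp ⊢
        calc _ ≤ ((x + 1 : ℕ) : ℝ) * (ρ ^ x * K ^ (x + 1)) := by gcongr
          _ = ((x + 1 : ℕ) : ℝ) * (K * (ρ ^ x * K ^ x)) := by ring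
          _ ≤ ((x + 1 : ℕ) : ℝ) * (K * (1 / 2) ^ x) := by gcongr
          _ = _ := by ring
  have eZ : (∑' x : ℕ, (0:ℝ) ^ x * statMeasure α 1 x) = 1 := by
    rw [tsum_eq_single 0]
    · simp [statMeasure]
    · intro x hx
      simp [hx]
  have eM : (∑' x : ℕ, (x : ℝ) * ((0:ℝ) ^ (x - 1) * statMeasure α 1 x)) = K := by
    rw [tsum_eq_single 1]
    · simp [statMeasure, hKdef]
    · intro x hx
      rcases x with _ | _ | x
      · simp
      · simp at hx
      · simp
  rw [eZ] at hZ
  rw [eM] at hM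
  have hlim := hZ.div hM hK.ne'
  have e : (1 : ℝ) / K = α / (1 + α) := by rw [hKdef, one_div_div]
  rw [e] at hlim
  refine hlim.congr' ?_
  filter_upwards [hev] with ρ h
  have hρ := h.1.ne'
  have hs : (∑' x : ℕ, (x : ℝ) * statMeasure α ρ x)
      = ρ * ∑' x : ℕ, (x : ℝ) * (ρ ^ (x - 1) * statMeasure α 1 x) := by
    rw [← tsum_mul_left]
    refine tsum_congr fun x => ?_
    rw [sm_eq]
    rcases x with _ | x
    · simp
    · simp only [Nat.add_sub_cancel]
      ring
  have hz : (∑' x : ℕ, statMeasure α ρ x) = ∑' x : ℕ, ρ ^ x * statMeasure α 1 x :=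
    tsum_congr fun x => sm_eq α ρ x
  simp only [Pi.div_apply]
  rw [meanFlows, hs, hz, div_div_eq_mul_div, mul_div_mul_left _ _ hρ]

end FlowCSMA
end
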